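/- Let $n \geq 2$ and let $N$ be a normal subgroup of the special unitary group $SU(n)$ over $\mathbb{C}$. Then either $N$ is contained in the center of $SU(n)$ or $N = SU(n)$. -/

import Mathlib

/-- The special unitary group `SU(n)`, as a subgroup of the unitary group of
`n × n` complex matrices. -/
def SU (n : ℕ) : Subgroup (Matrix.unitaryGroup (Fin n) ℂ) where
  carrier := {A | (A : Matrix (Fin n) (Fin n) ℂ).det = 1}
  one_mem' := by simp
  mul_mem' := by
    intro A B hA hB
    show ((A * B : Matrix.unitaryGroup (Fin n) ℂ) : Matrix (Fin n) (Fin n) ℂ).det = 1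
    rw [Matrix.UnitaryGroup.mul_val, Matrix.det_mul, hA, hB, mul_one]
  inv_mem' := by
    intro A hA
    show ((A⁻¹ : Matrix.unitaryGroup (Fin n) ℂ) : Matrix (Fin n) (Fin n) ℂ).det = 1
    rw [Matrix.UnitaryGroup.inv_val, Matrix.star_eq_conjTranspose, Matrix.det_conjTranspose,
      show ((A : Matrix (Fin n) (Fin n) ℂ)).det = 1 from hA]
    exact star_one ℂ

/-! A normal subgroup `K` of `U(n)` with a non-central element contains, by the spectral theorem, a
diagonal matrix `diag(d)` with `d i ≠ d j` for some `i` and `j`. Its commutators with the rotations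
of the `(i, j)`-plane lie in `K` and in the copy of `SU(2)` acting on that plane, and as the angle
varies their trace takes every value in `[2 Re(d i / d j), 2]`. A conjugacy class of `SU(2)` is
determined by its trace, so `K` contains, in the `(i, j)`-plane, `diag(z, z⁻¹)` for all `z` on an
arc around `1`, hence, taking powers, for all `z`. Products of such matrices over the various pairs
`(i, j)` give every diagonal matrix of determinant one, and then every element of `SU(n)`. Finally
`U(n)` is generated by `SU(n)` and scalars, so a normal subgroup of `SU(n)` is normal in `U(n)`. -/

open Matrix Module
open scoped commutatorElement

section Spectral

variable {ι : Type*} [Fintype ι]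

theorem exists_orthonormalBasis_forall_mem {κ 𝕜 E : Type*} [DecidableEq κ] [RCLike 𝕜]
    [NormedAddCommGroup E] [InnerProductSpace 𝕜 E] [FiniteDimensional 𝕜 E]
    {V : κ → Submodule 𝕜 E} (hV : DirectSum.IsInternal V)
    (hO : OrthogonalFamily 𝕜 (fun k => V k) fun k => (V k).subtypeₗᵢ)
    (hcard : finrank 𝕜 E = Fintype.card ι) :
    ∃ b : OrthonormalBasis ι 𝕜 E, ∀ i, ∃ k, b i ∈ V k := by
  classical
  have : Fintype {k // V k ≠ ⊥} :=
    (WellFoundedGT.finite_ne_bot_of_iSupIndep hV.submodule_iSupIndep).fintype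
  have hV' := DirectSum.isInternal_ne_bot_iff.mpr hV
  have hO' := hO.comp (Subtype.val_injective (p := fun k => V k ≠ ⊥))
  refine ⟨(hV'.subordinateOrthonormalBasis hcard hO').reindex (Fintype.equivFin ι).symm,
    fun i =>
    ⟨(hV'.subordinateOrthonormalBasisIndex hcard (Fintype.equivFin ι i) hO').1, ?_⟩⟩
  simpa using hV'.subordinateOrthonormalBasis_subordinate hcard (Fintype.equivFin ι i) hO'

open Module.End in
theorem exists_orthonormalBasis_joint_eigenvectors {𝕜 E : Type*} [RCLike 𝕜]
    [NormedAddCommGroup E] [InnerProductSpace 𝕜 E] [FiniteDimensional 𝕜 E]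
    {S T : E →ₗ[𝕜] E} (hS : S.IsSymmetric) (hT : T.IsSymmetric) (hST : Commute S T)
    (hcard : finrank 𝕜 E = Fintype.card ι) :
    ∃ (b : OrthonormalBasis ι 𝕜 E) (μ ν : ι → 𝕜),
      ∀ i, S (b i) = μ i • b i ∧ T (b i) = ν i • b i := by
  classical
  obtain ⟨b, hb⟩ := exists_orthonormalBasis_forall_mem (hS.directSum_isInternal_of_commute hT hST)
    (hS.orthogonalFamily_eigenspace_inf_eigenspace hT) hcard
  choose χ hχ using hb
  exact ⟨b, fun i => (χ i).2, fun i => (χ i).1, fun i =>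
    (hχ i).imp mem_eigenspace_iff.mp mem_eigenspace_iff.mp⟩

variable [DecidableEq ι]

open scoped ComplexStarModule in
theorem exists_eq_unitary_conj_diagonal (A : Matrix ι ι ℂ) [IsStarNormal A] :
    ∃ (U : unitaryGroup ι ℂ) (d : ι → ℂ), A = U * diagonal d * star (U : Matrix ι ι ℂ) := by
  have hcomm : Commute (toLpLinAlgEquiv 2 (ℜ A : Matrix ι ι ℂ))
      (toLpLinAlgEquiv 2 (ℑ A : Matrix ι ι ℂ)) :=
    (Commute.realPart_imaginaryPart A).map _
  obtain ⟨b, μ, ν, hb⟩ := exists_orthonormalBasis_joint_eigenvectors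
    (isSymmetric_toEuclideanLin_iff.mpr (ℜ A).2) (isSymmetric_toEuclideanLin_iff.mpr (ℑ A).2)
    hcomm finrank_euclideanSpace
  let U : unitaryGroup ι ℂ := ⟨(EuclideanSpace.basisFun ι ℂ).toBasis.toMatrix b.toBasis,
    (EuclideanSpace.basisFun ι ℂ).toMatrix_orthonormalBasis_mem_unitary b⟩
  refine ⟨U, fun i => μ i + Complex.I * ν i, ?_⟩
  have hAU : A * U = U * diagonal fun i => μ i + Complex.I * ν i := by
    ext i k
    have hAb : A *ᵥ (b k).ofLp = (μ k + Complex.I * ν k) • (b k).ofLp := by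
      have hre := congrArg WithLp.ofLp (hb k).1
      have him := congrArg WithLp.ofLp (hb k).2
      simp only [toLpLin_apply, WithLp.ofLp_smul] at hre him
      conv_lhs => rw [← realPart_add_I_smul_imaginaryPart A]
      rw [add_mulVec, smul_mulVec, hre, him, smul_smul, add_smul]
    rw [mul_diagonal, mul_comm]
    exact congrFun hAb i
  rw [← hAU, mul_assoc, mem_unitaryGroup_iff.mp U.2, mul_one]

end Spectral

section UnitaryConj

variable {ι R : Type*} [Fintype ι] [DecidableEq ι] [CommRing R] [StarRing R]

theorem det_unitary_conj (U A : unitaryGroup ι R) :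
    ((U * A * U⁻¹ : unitaryGroup ι R) : Matrix ι ι R).det = (A : Matrix ι ι R).det := by
  rw [UnitaryGroup.mul_val, det_mul_comm, ← UnitaryGroup.mul_val, inv_mul_cancel_left]

theorem trace_unitary_conj (U A : unitaryGroup ι R) :
    ((U * A * U⁻¹ : unitaryGroup ι R) : Matrix ι ι R).trace = (A : Matrix ι ι R).trace := by
  rw [UnitaryGroup.mul_val, trace_mul_comm, ← UnitaryGroup.mul_val, inv_mul_cancel_left]

theorem det_commutator_unitary (A B : unitaryGroup ι R) :
    ((⁅A, B⁆ : unitaryGroup ι R) : Matrix ι ι R).det = 1 := by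
  rw [commutatorElement_def, UnitaryGroup.mul_val, det_mul, det_unitary_conj, ← det_mul,
    ← UnitaryGroup.mul_val, mul_inv_cancel, UnitaryGroup.one_val, det_one]

end UnitaryConj

section DiagonalUnitary

variable {ι : Type*} [Fintype ι] [DecidableEq ι]

/-- The diagonal unitary matrix with diagonal `d`. As a homomorphism this parametrises the standard
maximal torus of the unitary group. -/
def diagonalUnitary : (ι → Circle) →* unitaryGroup ι ℂ where
  toFun d := ⟨diagonal fun i => (d i : ℂ), by
    simp [mem_unitaryGroup_iff, star_eq_conjTranspose, diagonal_conjTranspose, Complex.mul_conj]⟩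
  map_one' := by ext; simp
  map_mul' d e := by ext; simp

theorem coe_diagonalUnitary (d : ι → Circle) :
    (diagonalUnitary d : Matrix ι ι ℂ) = diagonal fun i => (d i : ℂ) := rfl

theorem det_diagonalUnitary (d : ι → Circle) :
    (diagonalUnitary d : Matrix ι ι ℂ).det = ((∏ i, d i : Circle) : ℂ) := by
  rw [coe_diagonalUnitary, det_diagonal]
  exact (map_prod Circle.coeHom _ _).symm

theorem diagonalUnitary_mem_center {d : ι → Circle} (hd : ∀ i j, d i = d j) :
    diagonalUnitary d ∈ Subgroup.center (unitaryGroup ι ℂ) := by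
  rw [Subgroup.mem_center_iff]
  intro A
  ext i j
  simp [coe_diagonalUnitary, hd i j, mul_comm]

theorem norm_eq_one_of_diagonal_mem_unitaryGroup {d : ι → ℂ}
    (hd : diagonal d ∈ unitaryGroup ι ℂ) (i : ι) : ‖d i‖ = 1 := by
  rw [mem_unitaryGroup_iff, star_eq_conjTranspose, diagonal_conjTranspose, diagonal_mul_diagonal,
    ← diagonal_one] at hd
  exact CStarRing.norm_of_mem_unitary
    (Unitary.mem_iff_self_mul_star.mpr (congrFun (diagonal_injective hd) i))

theorem exists_eq_conj_diagonalUnitary (A : unitaryGroup ι ℂ) :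
    ∃ (U : unitaryGroup ι ℂ) (d : ι → Circle), A = U * diagonalUnitary d * U⁻¹ := by
  obtain ⟨U, d, hA⟩ := exists_eq_unitary_conj_diagonal (A : Matrix ι ι ℂ)
  have hUAU : ((U⁻¹ * A * U : unitaryGroup ι ℂ) : Matrix ι ι ℂ) = diagonal d := by
    simp [hA, mul_assoc, ← mul_assoc (star (U : Matrix ι ι ℂ)) U]
  have hd : ∀ i, ‖d i‖ = 1 :=
    norm_eq_one_of_diagonal_mem_unitaryGroup (hUAU ▸ (U⁻¹ * A * U).2)
  let e : ι → Circle := fun i => ⟨d i, mem_sphere_zero_iff_norm.mpr (hd i)⟩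
  have he : U⁻¹ * A * U = diagonalUnitary e := Subtype.ext hUAU
  exact ⟨U, e, by rw [← he]; group⟩

end DiagonalUnitary

section ExtendByOne

theorem conjTranspose_one_add_conj {ι κ R : Type*} [DecidableEq ι] [Fintype κ] [DecidableEq κ]
    [Ring R] [StarRing R] (V : Matrix ι κ R) (A : Matrix κ κ R) :
    (1 + V * (A - 1) * Vᴴ)ᴴ = 1 + V * (Aᴴ - 1) * Vᴴ := by
  simp [conjTranspose_mul, Matrix.mul_assoc]

theorem one_add_conj_mul_one_add_conj {ι κ R : Type*} [Fintype ι] [DecidableEq ι] [Fintype κ]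
    [DecidableEq κ] [Ring R] [StarRing R] {V : Matrix ι κ R} (hV : Vᴴ * V = 1)
    (A B : Matrix κ κ R) :
    (1 + V * (A - 1) * Vᴴ) * (1 + V * (B - 1) * Vᴴ) = 1 + V * (A * B - 1) * Vᴴ := by
  have hmul : V * (A - 1) * Vᴴ * (V * (B - 1) * Vᴴ) = V * ((A - 1) * (B - 1)) * Vᴴ := by
    calc _ = V * (A - 1) * (Vᴴ * V) * (B - 1) * Vᴴ := by simp only [Matrix.mul_assoc]
      _ = _ := by rw [hV, Matrix.mul_one, Matrix.mul_assoc V]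
  have hsum : A * B - 1 = (A - 1) + (B - 1) + (A - 1) * (B - 1) := by noncomm_ring
  rw [add_mul, one_mul, mul_add, mul_one, hmul, hsum]
  simp only [Matrix.mul_add, Matrix.add_mul]
  abel

variable {ι κ R : Type*} [Fintype ι] [DecidableEq ι] [Fintype κ] [DecidableEq κ]
  [CommRing R] [StarRing R]

/-- For an isometry `V`, the unitary `1 + V (W - 1) Vᴴ` acts as `W` on the range of `V` and as the
identity on its orthogonal complement. -/
def extendByOne (V : Matrix ι κ R) (hV : Vᴴ * V = 1) : unitaryGroup κ R →* unitaryGroup ι R where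
  toFun W := ⟨1 + V * ((W : Matrix κ κ R) - 1) * Vᴴ, by
    rw [mem_unitaryGroup_iff, star_eq_conjTranspose, conjTranspose_one_add_conj,
      one_add_conj_mul_one_add_conj hV, ← star_eq_conjTranspose, mem_unitaryGroup_iff.mp W.2]
    simp⟩
  map_one' := by ext; simp
  map_mul' W X := Subtype.ext (one_add_conj_mul_one_add_conj hV W X).symm

theorem conj_extendByOne {V : Matrix ι κ R} (hV : Vᴴ * V = 1) {A : unitaryGroup ι R}
    {B : unitaryGroup κ R} (hAB : (A : Matrix ι ι R) * V = V * (B : Matrix κ κ R))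
    (W : unitaryGroup κ R) :
    A * extendByOne V hV W * A⁻¹ = extendByOne V hV (B * W * B⁻¹) := by
  have hAB' : Vᴴ * (A : Matrix ι ι R)ᴴ = (B : Matrix κ κ R)ᴴ * Vᴴ := by
    simpa only [conjTranspose_mul] using congrArg conjTranspose hAB
  have hA : (A : Matrix ι ι R) * (A : Matrix ι ι R)ᴴ = 1 := mem_unitaryGroup_iff.mp A.2
  have hB : (B : Matrix κ κ R) * (B : Matrix κ κ R)ᴴ = 1 := mem_unitaryGroup_iff.mp B.2
  apply Subtype.ext
  change (A : Matrix ι ι R) * (1 + V * ((W : Matrix κ κ R) - 1) * Vᴴ) * (A : Matrix ι ι R)ᴴ =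
    1 + V * ((B : Matrix κ κ R) * (W : Matrix κ κ R) * (B : Matrix κ κ R)ᴴ - 1) * Vᴴ
  generalize (A : Matrix ι ι R) = A, (B : Matrix κ κ R) = B, (W : Matrix κ κ R) = W at *
  calc A * (1 + V * (W - 1) * Vᴴ) * Aᴴ
      = 1 + (A * V) * (W - 1) * (Vᴴ * Aᴴ) := by
        rw [mul_add, add_mul, mul_one, hA]
        simp only [Matrix.mul_assoc]
    _ = 1 + V * (B * (W - 1) * Bᴴ) * Vᴴ := by
        rw [hAB, hAB']
        simp only [Matrix.mul_assoc]
    _ = 1 + V * (B * W * Bᴴ - 1) * Vᴴ := by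
        rw [mul_sub, sub_mul, mul_one, hB]

theorem extendByOne_commutator_mem {K : Subgroup (unitaryGroup ι R)} [K.Normal]
    {V : Matrix ι κ R} (hV : Vᴴ * V = 1) {A : unitaryGroup ι R} (hA : A ∈ K)
    {B : unitaryGroup κ R} (hAB : (A : Matrix ι ι R) * V = V * (B : Matrix κ κ R))
    (W : unitaryGroup κ R) :
    ⁅B, W⁆ ∈ K.comap (extendByOne V hV) := by
  have hcomm : extendByOne V hV ⁅B, W⁆ = ⁅A, extendByOne V hV W⁆ := by
    rw [commutatorElement_def, commutatorElement_def, map_mul, map_inv, conj_extendByOne hV hAB]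
  rw [Subgroup.mem_comap, hcomm]
  exact Subgroup.commutator_le_left K ⊤
    (Subgroup.commutator_mem_commutator hA (Subgroup.mem_top _))

end ExtendByOne

section CoordinateInclusion

/-- The matrix of the inclusion of coordinate spaces sending the basis vector `k` to the basis
vector `f k`. -/
def coordinateInclusion {ι κ : Type*} [DecidableEq ι] (R : Type*) [Zero R] [One R] (f : κ → ι) :
    Matrix ι κ R :=
  (1 : Matrix ι ι R).submatrix id f

variable {ι κ R : Type*} [DecidableEq ι] [DecidableEq κ] [Ring R] [StarRing R] {f : κ → ι}

theorem conjTranspose_coordinateInclusion_mul_self [Fintype ι] (hf : f.Injective) :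
    (coordinateInclusion R f)ᴴ * coordinateInclusion R f = 1 := by
  rw [coordinateInclusion, conjTranspose_submatrix, conjTranspose_one,
    ← submatrix_mul _ _ _ _ _ Function.bijective_id, one_mul, submatrix_one f hf]

theorem coordinateInclusion_conj_diagonal [Fintype κ] (hf : f.Injective) (c : κ → R) :
    coordinateInclusion R f * diagonal c * (coordinateInclusion R f)ᴴ =
      diagonal (Function.extend f c 0) := by
  ext i j
  simp only [mul_apply (N := _ᴴ), mul_diagonal, conjTranspose_apply, coordinateInclusion,
    submatrix_apply]
  by_cases hi : ∃ k, f k = i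
  · obtain ⟨k, rfl⟩ := hi
    by_cases hj : j = f k <;>
      simp [one_apply, hf.eq_iff, hf.extend_apply, hj, eq_comm (a := f k)]
  · have hi' : ∀ k, i ≠ f k := fun k h => hi ⟨k, h.symm⟩
    simp [one_apply, hi', Function.extend_apply' _ _ _ hi, diagonal_apply]

variable [Fintype ι] [Fintype κ]

theorem diagonalUnitary_mul_coordinateInclusion (f : κ → ι) (d : ι → Circle) :
    (diagonalUnitary d : Matrix ι ι ℂ) * coordinateInclusion ℂ f =
      coordinateInclusion ℂ f * (diagonalUnitary (d ∘ f) : Matrix κ κ ℂ) := by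
  ext i k
  rw [coe_diagonalUnitary, coe_diagonalUnitary, diagonal_mul, mul_diagonal]
  by_cases h : i = f k <;> simp [coordinateInclusion, one_apply, h]

theorem extendByOne_diagonalUnitary (hf : f.Injective) (d : κ → Circle) :
    extendByOne (coordinateInclusion ℂ f) (conjTranspose_coordinateInclusion_mul_self hf)
      (diagonalUnitary d) = diagonalUnitary (Function.extend f d 1) := by
  apply Subtype.ext
  change 1 + coordinateInclusion ℂ f * (diagonal (fun k => (d k : ℂ)) - 1) *
    (coordinateInclusion ℂ f)ᴴ = diagonal fun i => ((Function.extend f d 1 i : Circle) : ℂ)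
  rw [← diagonal_one, ← diagonal_one, diagonal_sub, coordinateInclusion_conj_diagonal hf,
    diagonal_add]
  congr 1 with i
  by_cases hi : ∃ k, f k = i
  · obtain ⟨k, rfl⟩ := hi
    simp [hf.extend_apply]
  · simp [Function.extend_apply' _ _ _ hi]

theorem extendByOne_diagonalUnitary_pair {i j : ι} (hij : (![i, j] : Fin 2 → ι).Injective)
    (z : Circle) :
    extendByOne (coordinateInclusion ℂ ![i, j]) (conjTranspose_coordinateInclusion_mul_self hij)
      (diagonalUnitary ![z, z⁻¹]) = diagonalUnitary (Pi.mulSingle i z / Pi.mulSingle j z) := by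
  rw [extendByOne_diagonalUnitary hij]
  congr 1
  ext k : 1
  have hne : i ≠ j := fun h => zero_ne_one (hij (a₁ := 0) (a₂ := 1) h)
  by_cases hk : ∃ l, ![i, j] l = k
  · obtain ⟨l, rfl⟩ := hk
    rw [hij.extend_apply]
    fin_cases l <;> simp [hne, hne.symm]
  · have hki : k ≠ i := fun h => hk ⟨0, h.symm⟩
    have hkj : k ≠ j := fun h => hk ⟨1, h.symm⟩
    simp [Function.extend_apply' _ _ _ hk, hki, hkj]

end CoordinateInclusion

section PlaneRotation

open Real

/-- The rotation of the plane by the angle `θ`, as a unitary matrix. -/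
noncomputable def planeRotation (θ : ℝ) : unitaryGroup (Fin 2) ℂ :=
  ⟨!![(cos θ : ℂ), -(sin θ : ℂ); (sin θ : ℂ), (cos θ : ℂ)], by
    have h : (cos θ : ℂ) ^ 2 + (sin θ : ℂ) ^ 2 = 1 := mod_cast cos_sq_add_sin_sq θ
    have hstar : star !![(cos θ : ℂ), -(sin θ : ℂ); (sin θ : ℂ), (cos θ : ℂ)] =
        !![(cos θ : ℂ), (sin θ : ℂ); -(sin θ : ℂ), (cos θ : ℂ)] := by
      ext i j
      fin_cases i <;> fin_cases j <;> simp [-Complex.ofReal_cos, -Complex.ofReal_sin]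
    rw [mem_unitaryGroup_iff, hstar, mul_fin_two, one_fin_two]
    congrm !![?_, ?_; ?_, ?_]
    · linear_combination h
    · ring
    · ring
    · linear_combination h⟩

theorem trace_commutator_planeRotation (a b : Circle) (θ : ℝ) :
    ((⁅diagonalUnitary ![a, b], planeRotation θ⁆ : unitaryGroup (Fin 2) ℂ) :
      Matrix (Fin 2) (Fin 2) ℂ).trace =
      ((2 * (cos θ ^ 2 + sin θ ^ 2 * ((a / b : Circle) : ℂ).re) : ℝ) : ℂ) := by
  have hre : (2 * ((a / b : Circle) : ℂ).re : ℂ) = a / b + b / a := by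
    have hconj : starRingEnd ℂ (a / b : Circle) = (b / a : Circle) := by
      rw [← Circle.coe_inv_eq_conj, inv_div]
    rw [← Circle.coe_div a, ← Circle.coe_div b, ← hconj, Complex.add_conj]
    push_cast
    rfl
  have htrace : ((⁅diagonalUnitary ![a, b], planeRotation θ⁆ : unitaryGroup (Fin 2) ℂ) :
      Matrix (Fin 2) (Fin 2) ℂ).trace =
      2 * (cos θ : ℂ) ^ 2 + (sin θ : ℂ) ^ 2 * (a / b + b / a) := by
    simp [commutatorElement_def, planeRotation, coe_diagonalUnitary, trace_fin_two,
      star_eq_conjTranspose, mul_apply, diagonal_apply, Fin.sum_univ_two,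
      -Complex.ofReal_cos, -Complex.ofReal_sin, ← Circle.coe_inv_eq_conj]
    field_simp
    ring
  rw [htrace, ← hre]
  push_cast
  ring

theorem exists_planeRotation_trace_commutator (a b : Circle) {c : ℝ}
    (hc : c ∈ Set.Icc ((a / b : Circle) : ℂ).re 1) :
    ∃ θ, ((⁅diagonalUnitary ![a, b], planeRotation θ⁆ : unitaryGroup (Fin 2) ℂ) :
      Matrix (Fin 2) (Fin 2) ℂ).trace = ((2 * c : ℝ) : ℂ) := by
  have hcont : Continuous fun θ => cos θ ^ 2 + sin θ ^ 2 * ((a / b : Circle) : ℂ).re := by fun_prop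
  obtain ⟨θ, hθ⟩ := mem_range_of_exists_le_of_exists_ge hcont ⟨π / 2, by simpa using hc.1⟩
    ⟨0, by simpa using hc.2⟩
  exact ⟨θ, by rw [trace_commutator_planeRotation, ← hθ]⟩

end PlaneRotation

section Circle

theorem circle_re_le_one (z : Circle) : (z : ℂ).re ≤ 1 :=
  (Complex.re_le_norm z).trans_eq (Circle.norm_coe z)

theorem circle_eq_or_eq_inv_of_re_eq {z w : Circle} (h : (z : ℂ).re = (w : ℂ).re) :
    z = w ∨ z = w⁻¹ := by
  have him : (z : ℂ).im ^ 2 = (w : ℂ).im ^ 2 := by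
    have hz := Circle.normSq_coe z
    have hw := Circle.normSq_coe w
    rw [Complex.normSq_apply] at hz hw
    rw [h] at hz
    linarith
  refine (sq_eq_sq_iff_eq_or_eq_neg.mp him).imp (fun him => ?_) (fun him => ?_)
  · exact Circle.ext (Complex.ext h him)
  · rw [← Circle.coe_inj, Circle.coe_inv_eq_conj]
    exact Complex.ext h him

theorem circle_re_lt_one {z : Circle} (hz : z ≠ 1) : (z : ℂ).re < 1 := by
  refine (circle_re_le_one z).lt_of_ne fun h => hz ?_
  simpa using circle_eq_or_eq_inv_of_re_eq (z := z) (w := 1) h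

theorem circle_exp_div_pow (θ : ℝ) {m : ℕ} (hm : m ≠ 0) :
    Circle.exp (θ / m) ^ m = Circle.exp θ := by
  rw [← Circle.exp_nsmul, nsmul_eq_mul, mul_div_cancel₀ θ (Nat.cast_ne_zero.mpr hm)]

theorem exists_circle_pow_eq (z : Circle) {m : ℕ} (hm : m ≠ 0) : ∃ w : Circle, w ^ m = z :=
  ⟨Circle.exp (Complex.arg z / m), by rw [circle_exp_div_pow _ hm, Circle.exp_arg]⟩

theorem exists_circle_pow_eq_lt_re (z : Circle) {r : ℝ} (hr : r < 1) :
    ∃ (m : ℕ) (w : Circle), w ^ m = z ∧ r < (w : ℂ).re := by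
  have hcos : Filter.Tendsto (fun m : ℕ => Real.cos (Complex.arg z / m)) Filter.atTop (nhds 1) :=
    Real.cos_zero ▸ (Real.continuous_cos.tendsto 0).comp
      (tendsto_const_div_atTop_nhds_zero_nat (Complex.arg z))
  obtain ⟨m, hm, hm0⟩ :=
    ((hcos.eventually (lt_mem_nhds hr)).and (Filter.eventually_ne_atTop 0)).exists
  refine ⟨m, Circle.exp (Complex.arg z / m), by rw [circle_exp_div_pow _ hm0, Circle.exp_arg], ?_⟩
  rwa [Circle.coe_exp, Complex.exp_ofReal_mul_I_re]

end Circle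

section RankTwo

variable {L : Subgroup (unitaryGroup (Fin 2) ℂ)} [L.Normal]

theorem diagonalUnitary_mem_of_trace_eq {W : unitaryGroup (Fin 2) ℂ} (hW : W ∈ L)
    (hdet : (W : Matrix (Fin 2) (Fin 2) ℂ).det = 1) {z : Circle}
    (htrace : (W : Matrix (Fin 2) (Fin 2) ℂ).trace = ((2 * (z : ℂ).re : ℝ) : ℂ)) :
    diagonalUnitary ![z, z⁻¹] ∈ L := by
  obtain ⟨U, e, rfl⟩ := exists_eq_conj_diagonalUnitary W
  have he : diagonalUnitary e ∈ L := by
    simpa [mul_assoc] using ‹L.Normal›.conj_mem _ hW U⁻¹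
  have he1 : e 1 = (e 0)⁻¹ := by
    rw [det_unitary_conj, det_diagonalUnitary, Circle.coe_eq_one, Fin.prod_univ_two] at hdet
    exact eq_inv_of_mul_eq_one_right hdet
  have he_eq : e = ![e 0, (e 0)⁻¹] := by
    ext k; fin_cases k <;> simp [he1]
  have hre : (e 0 : ℂ).re = (z : ℂ).re := by
    rw [trace_unitary_conj, coe_diagonalUnitary, trace_diagonal, Fin.sum_univ_two, he1,
      Circle.coe_inv_eq_conj, Complex.add_conj, Complex.ofReal_inj] at htrace
    linarith
  obtain h | h := circle_eq_or_eq_inv_of_re_eq hre <;> rw [he_eq, h] at he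
  · exact he
  · have hvec : ![z, z⁻¹] = ![z⁻¹, z⁻¹⁻¹]⁻¹ := by
      ext k; fin_cases k <;> simp
    rw [hvec, map_inv]
    exact L.inv_mem he

theorem diagonalUnitary_mem_of_commutators_mem {a b : Circle} (hab : a ≠ b)
    (hL : ∀ W, ⁅diagonalUnitary ![a, b], W⁆ ∈ L) (z : Circle) :
    diagonalUnitary ![z, z⁻¹] ∈ L := by
  obtain ⟨m, w, rfl, hw⟩ :=
    exists_circle_pow_eq_lt_re z (circle_re_lt_one (div_ne_one.mpr hab))
  obtain ⟨θ, hθ⟩ := exists_planeRotation_trace_commutator a b ⟨hw.le, circle_re_le_one w⟩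
  have hmem : diagonalUnitary ![w, w⁻¹] ∈ L :=
    diagonalUnitary_mem_of_trace_eq (hL _) (det_commutator_unitary _ _) hθ
  have hvec : ![w ^ m, (w ^ m)⁻¹] = ![w, w⁻¹] ^ m := by
    ext k; fin_cases k <;> simp
  rw [hvec, map_pow]
  exact L.pow_mem hmem m

end RankTwo

theorem eq_prod_mulSingle_div_mulSingle {ι G : Type*} [Fintype ι] [DecidableEq ι] [CommGroup G]
    {e : ι → G} (he : ∏ k, e k = 1) (i : ι) :
    e = ∏ k, Pi.mulSingle k (e k) / Pi.mulSingle i (e k) := by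
  have hi : ∏ k, Pi.mulSingle i (e k) = (1 : ι → G) := by
    simpa [he] using (map_prod (MonoidHom.mulSingle (fun _ : ι => G) i) e Finset.univ).symm
  rw [Finset.prod_div_distrib, Finset.univ_prod_mulSingle, hi, div_one]

section NormalSubgroup

variable {ι : Type*} [Fintype ι] [DecidableEq ι] {K : Subgroup (unitaryGroup ι ℂ)} [K.Normal]
  {d : ι → Circle} {i j : ι}

theorem diagonalUnitary_mulSingle_div_mem (hd : diagonalUnitary d ∈ K) (hij : d i ≠ d j)
    (z : Circle) : diagonalUnitary (Pi.mulSingle i z / Pi.mulSingle j z) ∈ K := by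
  have hinj : (![i, j] : Fin 2 → ι).Injective :=
    injective_pair_iff_ne.mpr (ne_of_apply_ne d hij)
  have hcomm := extendByOne_commutator_mem (conjTranspose_coordinateInclusion_mul_self hinj) hd
    (diagonalUnitary_mul_coordinateInclusion ![i, j] d)
  have hdij : d ∘ ![i, j] = ![d i, d j] := by
    ext k; fin_cases k <;> rfl
  rw [hdij] at hcomm
  rw [← extendByOne_diagonalUnitary_pair hinj]
  exact diagonalUnitary_mem_of_commutators_mem hij hcomm z

theorem diagonalUnitary_mulSingle_div_mem_of_nonconst (hd : diagonalUnitary d ∈ K) (hij : d i ≠ d j)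
    (p q : ι) (z : Circle) : diagonalUnitary (Pi.mulSingle p z / Pi.mulSingle q z) ∈ K := by
  by_cases hpq : d p = d q
  · obtain ⟨r, hr⟩ : ∃ r, d p ≠ d r := by
      by_contra! h
      exact hij ((h i).symm.trans (h j))
    rw [← div_mul_div_cancel _ (Pi.mulSingle r z), map_mul]
    exact K.mul_mem (diagonalUnitary_mulSingle_div_mem hd hr z)
      (diagonalUnitary_mulSingle_div_mem hd (hpq ▸ hr.symm) z)
  · exact diagonalUnitary_mulSingle_div_mem hd hpq z

theorem mem_of_det_eq_one_of_nonconst (hd : diagonalUnitary d ∈ K) (hij : d i ≠ d j)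
    {A : unitaryGroup ι ℂ} (hA : (A : Matrix ι ι ℂ).det = 1) : A ∈ K := by
  obtain ⟨U, e, rfl⟩ := exists_eq_conj_diagonalUnitary A
  rw [det_unitary_conj, det_diagonalUnitary, Circle.coe_eq_one] at hA
  refine ‹K.Normal›.conj_mem _ ?_ U
  rw [eq_prod_mulSingle_div_mulSingle hA i, ← Subgroup.mem_comap]
  exact Subgroup.prod_mem _ fun k _ =>
    diagonalUnitary_mulSingle_div_mem_of_nonconst hd hij k i (e k)

variable (K) in
theorem le_center_or_forall_det_eq_one_mem :
    K ≤ Subgroup.center (unitaryGroup ι ℂ) ∨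
      ∀ A : unitaryGroup ι ℂ, (A : Matrix ι ι ℂ).det = 1 → A ∈ K := by
  by_cases h : ∃ (d : ι → Circle) (i j : ι), diagonalUnitary d ∈ K ∧ d i ≠ d j
  · obtain ⟨d, i, j, hd, hij⟩ := h
    exact .inr fun A hA => mem_of_det_eq_one_of_nonconst hd hij hA
  · push Not at h
    refine .inl fun A hA => ?_
    obtain ⟨U, d, rfl⟩ := exists_eq_conj_diagonalUnitary A
    have hd : diagonalUnitary d ∈ K := by
      simpa [mul_assoc] using ‹K.Normal›.conj_mem _ hA U⁻¹
    exact Subgroup.Normal.conj_mem inferInstance _ (diagonalUnitary_mem_center (h d · · hd)) U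

end NormalSubgroup

theorem map_subtype_normal_of_sup_center_eq_top {G : Type*} [Group G] {H : Subgroup G}
    (hH : H ⊔ Subgroup.center G = ⊤) (N : Subgroup H) [N.Normal] : (N.map H.subtype).Normal := by
  rw [← Subgroup.normalizer_eq_top_iff, ← top_le_iff, ← hH]
  refine sup_le ?_ (Subgroup.center_le_normalizer _)
  simpa [Subgroup.normalizer_eq_top, ← MonoidHom.range_eq_map] using
    Subgroup.le_normalizer_map (H := N) H.subtype

theorem exists_mem_center_det_mul_eq_one {ι : Type*} [Fintype ι] [DecidableEq ι] [Nonempty ι]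
    (A : unitaryGroup ι ℂ) : ∃ C ∈ Subgroup.center (unitaryGroup ι ℂ),
      ((A * C : unitaryGroup ι ℂ) : Matrix ι ι ℂ).det = 1 := by
  let δ : Circle := ⟨(A : Matrix ι ι ℂ).det, mem_sphere_zero_iff_norm.mpr
    (CStarRing.norm_of_mem_unitary (det_of_mem_unitary A.2))⟩
  obtain ⟨c, hc⟩ := exists_circle_pow_eq δ⁻¹ (Fintype.card_ne_zero (α := ι))
  refine ⟨diagonalUnitary fun _ => c, diagonalUnitary_mem_center fun _ _ => rfl, ?_⟩
  rw [UnitaryGroup.mul_val, det_mul, det_diagonalUnitary, Finset.prod_const, Finset.card_univ, hc]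
  exact congrArg Subtype.val (mul_inv_cancel δ)

theorem SU_sup_center_eq_top {n : ℕ} (hn : n ≠ 0) :
    SU n ⊔ Subgroup.center (unitaryGroup (Fin n) ℂ) = ⊤ := by
  have : NeZero n := ⟨hn⟩
  refine eq_top_iff.mpr fun A _ => ?_
  obtain ⟨C, hC, hAC⟩ := exists_mem_center_det_mul_eq_one A
  rw [← mul_inv_cancel_right A C]
  exact Subgroup.mul_mem_sup hAC (inv_mem hC)

/-- For `n ≥ 2`, every normal subgroup of `SU(n)` is either contained in the center
or is all of `SU(n)`. -/
theorem stmt_5 (n : ℕ) (hn : 2 ≤ n) (N : Subgroup ↥(SU n)) (hN : N.Normal) :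
    N ≤ Subgroup.center ↥(SU n) ∨ N = ⊤ := by
  have hK : (N.map (SU n).subtype).Normal :=
    map_subtype_normal_of_sup_center_eq_top (SU_sup_center_eq_top (by lia)) N
  refine (le_center_or_forall_det_eq_one_mem (N.map (SU n).subtype)).imp (fun h A hA => ?_)
    fun h => eq_top_iff.mpr fun A _ => ?_
  · rw [Subgroup.mem_center_iff]
    exact fun B => Subtype.ext (Subgroup.mem_center_iff.mp (h (Subgroup.mem_map_of_mem _ hA)) B)
  · exact (Subgroup.mem_map_iff_mem (SU n).subtype_injective).mp (h A A.2)
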